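/- Let M be an acyclic module over a finite alphabet Λ with input set I of size k and node set S, let ω : I → S be total, and let F = ↻_ω M. Then for every c ≥ 1, the number of attractors of size c of F is at most |Λ|^{k·c}. -/

import Mathlib

/-- A module over alphabet `Λ` with node set `S` and input set `I`:
a family of local functions `f s : Λ^S → Λ^I → Λ`. -/
structure AModule (Λ S I : Type) where
  f : S → (S → Λ) → (I → Λ) → Λ

namespace AModule

variable {Λ S I : Type}

/-- One-step update `M(x,i)`. -/
def upd (M : AModule Λ S I) (x : S → Λ) (i : I → Λ) : S → Λ :=
  fun s => M.f s x i

/-- Iterated update `M(x,(i_1,…,i_m))`, defined by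
`M(x,∅) = x` and `M(x,(i_1,…,i_m)) = M(M(x,i_1),(i_2,…,i_m))`. -/
def seqUpd (M : AModule Λ S I) (x : S → Λ) {m : ℕ} (J : Fin m → I → Λ) : S → Λ :=
  (List.ofFn J).foldl M.upd x

/-- Node `s` influences node `s'`: two configurations over `S ∪ I` differing
exactly at `s` (so with the same input part) on which `f_{s'}` differs. -/
def Influences (M : AModule Λ S I) (s s' : S) : Prop :=
  ∃ (x x' : S → Λ) (i : I → Λ),
    (∀ r, r ≠ s → x r = x' r) ∧ x s ≠ x' s ∧ M.f s' x i ≠ M.f s' x' i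

/-- `M` is acyclic: its interaction digraph has no directed cycle. -/
def Acyclic (M : AModule Λ S I) : Prop :=
  ∀ s, ¬ Relation.TransGen M.Influences s s

/-- `O` is an output function of delay `m` for node `s`. -/
def IsOutputFn (M : AModule Λ S I) (s : S) {m : ℕ}
    (O : (Fin m → I → Λ) → Λ) : Prop :=
  ∀ (x : S → Λ) (J : Fin m → I → Λ), M.seqUpd x J s = O J

/-- The set of delays `m ≥ 1` for which `s` admits an output function. -/
def delaySet (M : AModule Λ S I) (s : S) : Set ℕ :=
  {m | 1 ≤ m ∧ ∃ O : (Fin m → I → Λ) → Λ, M.IsOutputFn s O}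

/-- The complete recursive wiring `↻_ω M` as a map on configurations:
`F(x)_s = f_s(x, (x_{ω(α)})_{α ∈ I})`. -/
def wireF (M : AModule Λ S I) (ω : I → S) : (S → Λ) → (S → Λ) :=
  fun x => M.upd x (fun α => x (ω α))

/-- The input sequence of length `k` generated by `x`:
`Ĵ(x)^k_ℓ = F^{ℓ-1}(x)|_{ω(I)}`. -/
def genSeq (M : AModule Λ S I) (ω : I → S) (x : S → Λ) (k : ℕ) :
    Fin k → I → Λ :=
  fun ℓ α => (M.wireF ω)^[ℓ.val] x (ω α)

end AModule

/-- An attractor of size `c` of the parallel map `F`: the (finite) periodic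
orbit of a configuration whose minimal period is `c`. -/
def IsAttractor {Λ S : Type} (F : (S → Λ) → (S → Λ)) (c : ℕ)
    (X : Set (S → Λ)) : Prop :=
  ∃ x : S → Λ, Function.minimalPeriod F x = c ∧ X = {y | ∃ j : ℕ, y = F^[j] x}

/-!
The dynamics of an acyclic module forgets its initial configuration and retains only the inputs
it receives. A configuration `x` with `F^c(x) = x` has an arbitrarily long past, so it is determined
by the values that `F^n(x)` takes on the recurrent inputs; by periodicity the `c` input
configurations at times `0, …, c - 1` suffice. There are `|Λ|^{k·c}` of these, and each attractor
of size `c` is the orbit of such an `x`.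
-/

open Function Relation
open scoped Cardinal

theorem dependsOn_of_update_eq {ι : Type*} {α : ι → Type*} {β : Type*} [Finite ι] [DecidableEq ι]
    {g : (∀ i, α i) → β} {s : Set ι} (hg : ∀ i ∉ s, ∀ x a, g (update x i a) = g x) :
    DependsOn g s := by
  intro x y hxy
  have piecewise_eq (T : Finset ι) : g (T.piecewise y x) = g x := by
    induction T using Finset.induction_on with
    | empty => rw [Finset.piecewise_empty]
    | insert i T hiT ih =>
      rw [Finset.piecewise_insert, ← ih]
      by_cases his : i ∈ s
      · have hi : y i = T.piecewise y x i := by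
          rw [Finset.piecewise_eq_of_notMem _ _ _ hiT, hxy i his]
        rw [hi, update_eq_self]
      · exact hg i his _ _
  have := Fintype.ofFinite ι
  rw [← piecewise_eq Finset.univ, Finset.piecewise_univ]

theorem IsAttractor.exists_mem_ptsOfPeriod {Λ S : Type} {F : (S → Λ) → (S → Λ)} {c : ℕ}
    {X : Set (S → Λ)} (hX : IsAttractor F c X) :
    ∃ x ∈ ptsOfPeriod F c, {y | ∃ j : ℕ, y = F^[j] x} = X := by
  obtain ⟨x, rfl, rfl⟩ := hX
  exact ⟨x, isPeriodicPt_minimalPeriod F x, rfl⟩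

theorem mk_isAttractor_le_mk_ptsOfPeriod {Λ S : Type} (F : (S → Λ) → (S → Λ)) (c : ℕ) :
    #{X : Set (S → Λ) // IsAttractor F c X} ≤ #(ptsOfPeriod F c) :=
  (Cardinal.mk_le_mk_of_subset fun _ => IsAttractor.exists_mem_ptsOfPeriod).trans
    Cardinal.mk_image_le

namespace AModule

variable {Λ S I : Type} {M : AModule Λ S I} {ω : I → S} {c : ℕ} {x y : S → Λ}

theorem f_update_of_not_influences [DecidableEq S] {r s : S} (h : ¬ M.Influences r s)
    (x : S → Λ) (a : Λ) (i : I → Λ) : M.f s (update x r a) i = M.f s x i := by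
  by_contra hne
  have hr : update x r a r ≠ x r := fun heq => by
    rw [update_self] at heq
    rw [heq, update_eq_self] at hne
    exact hne rfl
  exact h ⟨_, x, i, fun _ ht => update_of_ne ht a x, hr, hne⟩

theorem dependsOn_influences [Finite S] (M : AModule Λ S I) (s : S) (i : I → Λ) :
    DependsOn (fun x => M.f s x i) {r | M.Influences r s} := by
  classical
  exact dependsOn_of_update_eq fun _ hr x a => f_update_of_not_influences hr x a i

theorem Acyclic.wellFounded_influences [Finite S] (hM : M.Acyclic) : WellFounded M.Influences := by
  have : Std.Irrefl (TransGen M.Influences) := ⟨hM⟩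
  exact Subrelation.wf TransGen.single
    (Finite.wellFounded_of_trans_of_irrefl (TransGen M.Influences))

theorem iterate_succ_wireF_apply (M : AModule Λ S I) (ω : I → S) (n : ℕ) (x : S → Λ) (s : S) :
    (M.wireF ω)^[n + 1] x s =
      M.f s ((M.wireF ω)^[n] x) (fun α => (M.wireF ω)^[n] x (ω α)) := by
  rw [iterate_succ_apply']
  rfl

theorem iterate_wireF_apply_eq_of_genSeq_eq (hc : 0 < c)
    (hx : IsPeriodicPt (M.wireF ω) c x) (hy : IsPeriodicPt (M.wireF ω) c y)
    (hxy : M.genSeq ω x c = M.genSeq ω y c) (n : ℕ) (α : I) :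
    (M.wireF ω)^[n] x (ω α) = (M.wireF ω)^[n] y (ω α) := by
  rw [← hx.iterate_mod_apply, ← hy.iterate_mod_apply]
  exact congrFun₂ hxy ⟨n % c, Nat.mod_lt n hc⟩ α

theorem eq_of_iterate_wireF_apply_eq (hwf : WellFounded M.Influences)
    (hdep : ∀ s i, DependsOn (fun x => M.f s x i) {r | M.Influences r s}) (hc : 0 < c)
    (hx : IsPeriodicPt (M.wireF ω) c x) (hy : IsPeriodicPt (M.wireF ω) c y)
    (hxy : ∀ n α, (M.wireF ω)^[n] x (ω α) = (M.wireF ω)^[n] y (ω α)) : x = y := by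
  suffices ∀ s n, (M.wireF ω)^[n] x s = (M.wireF ω)^[n] y s from funext fun s => this s 0
  intro s
  induction s using hwf.induction with
  | _ s ih =>
    have succ_eq (n : ℕ) : (M.wireF ω)^[n + 1] x s = (M.wireF ω)^[n + 1] y s := by
      rw [iterate_succ_wireF_apply, iterate_succ_wireF_apply, funext (hxy n)]
      exact hdep s _ fun r hr => ih r hr n
    intro n
    obtain ⟨d, rfl⟩ := Nat.exists_eq_add_one.mpr hc
    -- Adding a period makes every time, including `n = 0`, the successor of another one.
    calc (M.wireF ω)^[n] x s = (M.wireF ω)^[n + d + 1] x s := by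
          rw [add_assoc, iterate_add_apply, hx.eq]
      _ = (M.wireF ω)^[n + d + 1] y s := succ_eq (n + d)
      _ = (M.wireF ω)^[n] y s := by rw [add_assoc, iterate_add_apply, hy.eq]

theorem injOn_genSeq_ptsOfPeriod (hwf : WellFounded M.Influences)
    (hdep : ∀ s i, DependsOn (fun x => M.f s x i) {r | M.Influences r s}) (hc : 0 < c) :
    Set.InjOn (fun x => M.genSeq ω x c) (ptsOfPeriod (M.wireF ω) c) :=
  fun _ hx _ hy hxy => eq_of_iterate_wireF_apply_eq hwf hdep hc hx hy
    (iterate_wireF_apply_eq_of_genSeq_eq hc hx hy hxy)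

theorem mk_ptsOfPeriod_wireF_le (hwf : WellFounded M.Influences)
    (hdep : ∀ s i, DependsOn (fun x => M.f s x i) {r | M.Influences r s}) (ω : I → S)
    (hc : 0 < c) : #(ptsOfPeriod (M.wireF ω) c) ≤ #Λ ^ (#I * c) :=
  calc #(ptsOfPeriod (M.wireF ω) c) ≤ #(Fin c → I → Λ) :=
        Cardinal.mk_le_of_injective (injOn_genSeq_ptsOfPeriod hwf hdep hc).injective
    _ = #Λ ^ (#I * c) := by simp [Cardinal.power_mul]

end AModule

theorem statement10_general {Λ S I : Type} {M : AModule Λ S I}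
    (hwf : WellFounded M.Influences)
    (hdep : ∀ s i, DependsOn (fun x => M.f s x i) {r | M.Influences r s}) (ω : I → S)
    {c : ℕ} (hc : 0 < c) :
    #{X : Set (S → Λ) // IsAttractor (M.wireF ω) c X} ≤ #Λ ^ (#I * c) :=
  (mk_isAttractor_le_mk_ptsOfPeriod (M.wireF ω) c).trans (M.mk_ptsOfPeriod_wireF_le hwf hdep ω hc)

/-- the number of attractors of size `c` of the complete
recursive wiring of an acyclic module with `k` inputs is at most `|Λ|^{k·c}`. -/
theorem statement10 {Λ S I : Type} [Fintype Λ] [Fintype S] [Fintype I]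
    (hΛ : 2 ≤ Fintype.card Λ) (k : ℕ) (hk : Fintype.card I = k)
    (M : AModule Λ S I) (hM : M.Acyclic) (ω : I → S)
    (c : ℕ) (hc : 1 ≤ c) :
    Nat.card {X : Set (S → Λ) // IsAttractor (M.wireF ω) c X} ≤
      Fintype.card Λ ^ (k * c) := by
  have hcard := statement10_general hM.wellFounded_influences M.dependsOn_influences ω hc
  rw [Cardinal.mk_fintype Λ, Cardinal.mk_fintype I, hk] at hcard
  exact_mod_cast (Cardinal.natCast_toNat_le _).trans hcard
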